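/- Let φ, Φ: S_{m−1} → S_m be defined by φ(π_1⋯π_{m−1}) = (π_1+1)(π_2+1)⋯(π_{m−1}+1)·1 and Φ(π_1⋯π_{m−1}) = π_1π_2⋯π_{m−1}·m. For every n ≥ 5, the set S_n(∅;{132,312}) of permutations of {1,…,n} containing each of 132 and 312 exactly once equals {φ(π) : π ∈ S_{n−1}(∅;{132,312})} ∪ {Φ(π) : π ∈ S_{n−1}(∅;{132,312})}; moreover S_4(∅;{132,312}) = {2413, 3142}. -/

import Mathlib

/-- Number of occurrences of the pattern `α ∈ S_k` in the permutation `π ∈ S_n`: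
the number of strictly increasing choices of `k` indices such that the corresponding
subword of `π` is order-isomorphic to `α`. -/
noncomputable def occCount {k n : ℕ} (α : Equiv.Perm (Fin k)) (π : Equiv.Perm (Fin n)) : ℕ :=
  Nat.card {f : Fin k → Fin n // StrictMono f ∧ ∀ a b : Fin k, α a < α b ↔ π (f a) < π (f b)}

/-- `π` avoids the pattern `α`. -/
def avoids {k n : ℕ} (α : Equiv.Perm (Fin k)) (π : Equiv.Perm (Fin n)) : Prop :=
  occCount α π = 0

/-- `π` contains the pattern `α` exactly once. -/
def containsOnce {k n : ℕ} (α : Equiv.Perm (Fin k)) (π : Equiv.Perm (Fin n)) : Prop :=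
  occCount α π = 1

/-- The pattern `123` (as a permutation of `Fin 3`, 0-indexed). -/
def p123 : Equiv.Perm (Fin 3) := ⟨![0,1,2], ![0,1,2], by decide, by decide⟩
/-- The pattern `132`. -/
def p132 : Equiv.Perm (Fin 3) := ⟨![0,2,1], ![0,2,1], by decide, by decide⟩
/-- The pattern `213`. -/
def p213 : Equiv.Perm (Fin 3) := ⟨![1,0,2], ![1,0,2], by decide, by decide⟩
/-- The pattern `231`. -/
def p231 : Equiv.Perm (Fin 3) := ⟨![1,2,0], ![2,0,1], by decide, by decide⟩
/-- The pattern `312`. -/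
def p312 : Equiv.Perm (Fin 3) := ⟨![2,0,1], ![1,2,0], by decide, by decide⟩
/-- The pattern `321`. -/
def p321 : Equiv.Perm (Fin 3) := ⟨![2,1,0], ![2,1,0], by decide, by decide⟩

/-- `s_n(α;β)`: the number of permutations of `{1,…,n}` that avoid `α` and contain `β`
exactly once. -/
noncomputable def sAvoidContain (α β : Equiv.Perm (Fin 3)) (n : ℕ) : ℕ :=
  Nat.card {π : Equiv.Perm (Fin n) // avoids α π ∧ containsOnce β π}

/-- `s_n(∅;{α,β})`: the number of permutations of `{1,…,n}` that contain each of `α` and `β`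
exactly once. -/
noncomputable def sContainBoth (α β : Equiv.Perm (Fin 3)) (n : ℕ) : ℕ :=
  Nat.card {π : Equiv.Perm (Fin n) // containsOnce α π ∧ containsOnce β π}

/-- `φ : S_m → S_{m+1}` appends a new smallest element at the end:
`φ(π₁…π_m) = (π₁+1)(π₂+1)⋯(π_m+1)·1`. -/
def phi {m : ℕ} (π : Equiv.Perm (Fin m)) : Equiv.Perm (Fin (m + 1)) where
  toFun i := Fin.lastCases 0 (fun j => (π j).succ) i
  invFun v := Fin.cases (Fin.last m) (fun j => (π.symm j).castSucc) v
  left_inv i := by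
    induction i using Fin.lastCases with
    | last => simp
    | cast j => simp
  right_inv v := by
    induction v using Fin.cases with
    | zero => simp
    | succ j => simp

/-- `Φ : S_m → S_{m+1}` appends a new largest element at the end:
`Φ(π₁…π_m) = π₁π₂⋯π_m·(m+1)`. -/
def Phi {m : ℕ} (π : Equiv.Perm (Fin m)) : Equiv.Perm (Fin (m + 1)) where
  toFun i := Fin.lastCases (Fin.last m) (fun j => (π j).castSucc) i
  invFun v := Fin.lastCases (Fin.last m) (fun j => (π.symm j).castSucc) v
  left_inv i := by
    induction i using Fin.lastCases with
    | last => simp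
    | cast j => simp
  right_inv v := by
    induction v using Fin.lastCases with
    | last => simp
    | cast j => simp

/-- `S_n(α;β)`: the set of permutations of `{1,…,n}` avoiding `α` and containing `β`
exactly once. -/
def SnAvoidContain (α β : Equiv.Perm (Fin 3)) (n : ℕ) : Set (Equiv.Perm (Fin n)) :=
  {π | avoids α π ∧ containsOnce β π}

/-- `S_n(∅;{α,β})`: the set of permutations of `{1,…,n}` containing each of `α` and `β`
exactly once. -/
def SnContainBoth (α β : Equiv.Perm (Fin 3)) (n : ℕ) : Set (Equiv.Perm (Fin n)) :=
  {π | containsOnce α π ∧ containsOnce β π}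

/-- `π` is the permutation whose one-line word (1-indexed positions, values in `{1,…,n}`)
is given by `w`. -/
def hasWord {n : ℕ} (π : Equiv.Perm (Fin n)) (w : ℕ → ℕ) : Prop :=
  ∀ j : Fin n, (π j : ℕ) + 1 = w ((j : ℕ) + 1)

/-- The permutation with one-line word `2413`. -/
def w2413 : Equiv.Perm (Fin 4) := ⟨![1,3,0,2], ![2,0,3,1], by decide, by decide⟩
/-- The permutation with one-line word `3142`. -/
def w3142 : Equiv.Perm (Fin 4) := ⟨![2,0,3,1], ![1,3,0,2], by decide, by decide⟩

/-! Let `v` be the last entry of `π`, entries being counted from `1` here although they start from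
`0` in `Fin n`. A pair of values `x < v < y` forms, together with `v`, an occurrence of `132` or of
`312`, according to which of `x` and `y` comes first. So `π` has at least `(v - 1) (n - v)`
occurrences of the two patterns together; if there are only two, while `n ≥ 5`, then `v` is `1` or
`n`, as otherwise `(v - 1) (n - v) ≥ n - 2 ≥ 3`. In either case the last entry takes part in no
occurrence and can be removed. -/

section Occurrences

open Finset

variable {k m n : ℕ}

/-- The occurrences of the pattern `α` in `π`, each encoded by the increasing map listing its
positions. As a computable `Finset` it makes `occCount` accessible to `decide`. -/
def occurrences (α : Equiv.Perm (Fin k)) (π : Equiv.Perm (Fin n)) :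
    Finset (Fin k → Fin n) :=
  {f | StrictMono f ∧ ∀ a b, α a < α b ↔ π (f a) < π (f b)}

lemma mem_occurrences {α : Equiv.Perm (Fin k)} {π : Equiv.Perm (Fin n)} {f : Fin k → Fin n} :
    f ∈ occurrences α π ↔ StrictMono f ∧ ∀ a b, α a < α b ↔ π (f a) < π (f b) := by
  simp [occurrences]

lemma occCount_eq_card_occurrences (α : Equiv.Perm (Fin k)) (π : Equiv.Perm (Fin n)) :
    occCount α π = #(occurrences α π) :=
  Nat.subtype_card _ fun _ => mem_occurrences

lemma strictMono_vecCons_three {i j l : Fin n} (hij : i < j) (hjl : j < l) :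
    StrictMono ![i, j, l] := by
  simp [Fin.strictMono_iff_lt_succ, Fin.forall_fin_succ, hij, hjl]

lemma vecCons_mem_occurrences_p132 {π : Equiv.Perm (Fin n)} {i j l : Fin n}
    (hij : i < j) (hjl : j < l) (hπil : π i < π l) (hπlj : π l < π j) :
    ![i, j, l] ∈ occurrences p132 π := by
  refine mem_occurrences.2 ⟨strictMono_vecCons_three hij hjl, ?_⟩
  simp [p132, Fin.forall_fin_succ, hπil, hπlj, hπil.le, hπlj.le, hπil.trans hπlj,
    (hπil.trans hπlj).le]

lemma vecCons_mem_occurrences_p312 {π : Equiv.Perm (Fin n)} {i j l : Fin n}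
    (hij : i < j) (hjl : j < l) (hπjl : π j < π l) (hπli : π l < π i) :
    ![i, j, l] ∈ occurrences p312 π := by
  refine mem_occurrences.2 ⟨strictMono_vecCons_three hij hjl, ?_⟩
  simp [p312, Fin.forall_fin_succ, hπjl, hπli, hπjl.le, hπli.le, hπjl.trans hπli,
    (hπjl.trans hπli).le]

lemma apply_last_mul_sub_le_occCount_add (π : Equiv.Perm (Fin (m + 1))) :
    (π (Fin.last m) : ℕ) * (m - π (Fin.last m)) ≤ occCount p132 π + occCount p312 π := by
  set v := π (Fin.last m)
  have lt_last {x : Fin (m + 1)} (hx : x ≠ v) : π.symm x < Fin.last m :=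
    Fin.lt_last_iff_ne_last.2 fun h => hx (π.symm_apply_eq.1 h)
  let pairs := Iio v ×ˢ Ioi v
  have card_pairs : #pairs = (v : ℕ) * (m - v) := by
    simp [pairs, Fin.card_Iio, Fin.card_Ioi]
  have card_132 : #{p ∈ pairs | π.symm p.1 < π.symm p.2} ≤ occCount p132 π := by
    rw [occCount_eq_card_occurrences]
    refine card_le_card_of_injOn (fun p => ![π.symm p.1, π.symm p.2, Fin.last m]) ?_ ?_
    · rintro ⟨x, y⟩ hxy
      obtain ⟨⟨hx, hy⟩, hlt⟩ : (x < v ∧ v < y) ∧ π.symm x < π.symm y := by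
        simpa [pairs] using hxy
      exact vecCons_mem_occurrences_p132 hlt (lt_last hy.ne') (by simpa) (by simpa)
    · rintro ⟨x, y⟩ - ⟨x', y'⟩ - h
      simpa using h
  have card_312 : #{p ∈ pairs | ¬ π.symm p.1 < π.symm p.2} ≤ occCount p312 π := by
    rw [occCount_eq_card_occurrences]
    refine card_le_card_of_injOn (fun p => ![π.symm p.2, π.symm p.1, Fin.last m]) ?_ ?_
    · rintro ⟨x, y⟩ hxy
      obtain ⟨⟨hx, hy⟩, hle⟩ : (x < v ∧ v < y) ∧ π.symm y ≤ π.symm x := by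
        simpa [pairs] using hxy
      have hlt : π.symm y < π.symm x :=
        hle.lt_of_ne fun h => (hx.trans hy).ne' (π.symm.injective h)
      exact vecCons_mem_occurrences_p312 hlt (lt_last hx.ne) (by simpa) (by simpa)
    · rintro ⟨x, y⟩ - ⟨x', y'⟩ - h
      simpa [and_comm] using h
  rw [← card_pairs, ← card_filter_add_card_filter_not fun p => π.symm p.1 < π.symm p.2]
  exact add_le_add card_132 card_312

lemma apply_last_eq_zero_or_last {π : Equiv.Perm (Fin (m + 1))}
    (h : occCount p132 π + occCount p312 π + 1 < m) :
    π (Fin.last m) = 0 ∨ π (Fin.last m) = Fin.last m := by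
  by_contra! ⟨hzero, hlast⟩
  have hpos : 0 < (π (Fin.last m) : ℕ) := Fin.pos_iff_ne_zero.2 hzero
  obtain ⟨d, hd⟩ : ∃ d, m = π (Fin.last m) + d + 1 :=
    Nat.exists_eq_add_of_lt (Fin.val_lt_last hlast)
  have hle := apply_last_mul_sub_le_occCount_add π
  rw [show m - (π (Fin.last m) : ℕ) = d + 1 by omega] at hle
  have hmul : d ≤ (π (Fin.last m) : ℕ) * d := Nat.le_mul_of_pos_left d hpos
  rw [mul_add_one] at hle
  omega

lemma occCount_eq_of_castSucc_lt_iff {α : Equiv.Perm (Fin k)} {π : Equiv.Perm (Fin m)}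
    {τ : Equiv.Perm (Fin (m + 1))}
    (hτ : ∀ i j : Fin m, τ i.castSucc < τ j.castSucc ↔ π i < π j)
    (hlast : ∀ f ∈ occurrences α τ, ∀ a, f a ≠ Fin.last m) :
    occCount α τ = occCount α π := by
  simp only [occCount_eq_card_occurrences]
  symm
  refine card_bij (fun f _ a => (f a).castSucc) ?_ ?_ ?_
  · intro f hf
    obtain ⟨hmono, hiff⟩ := mem_occurrences.1 hf
    exact mem_occurrences.2
      ⟨Fin.strictMono_castSucc.comp hmono, fun a b => (hiff a b).trans (hτ _ _).symm⟩
  · intro f _ g _ h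
    exact (Fin.castSucc_injective m).comp_left h
  · intro f hf
    obtain ⟨hmono, hiff⟩ := mem_occurrences.1 hf
    obtain ⟨g, rfl⟩ : ∃ g : Fin k → Fin m, (fun a => (g a).castSucc) = f :=
      ⟨fun a => (f a).castPred (hlast f hf a), by simp⟩
    exact ⟨g, mem_occurrences.2 ⟨fun a b hab => hmono hab, fun a b => (hiff a b).trans (hτ _ _)⟩,
      rfl⟩

lemma apply_ne_last_of_apply_last_ne {f : Fin (k + 1) → Fin (m + 1)} (hf : StrictMono f)
    (h : f (Fin.last k) ≠ Fin.last m) (a : Fin (k + 1)) : f a ≠ Fin.last m :=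
  ((hf.monotone a.le_last).trans_lt (Fin.lt_last_iff_ne_last.2 h)).ne

lemma occCount_phi {α : Equiv.Perm (Fin (k + 1))} (hα : α (Fin.last k) ≠ 0)
    (π : Equiv.Perm (Fin m)) : occCount α (phi π) = occCount α π := by
  refine occCount_eq_of_castSucc_lt_iff (by simp [phi]) fun f hf => ?_
  obtain ⟨hmono, hiff⟩ := mem_occurrences.1 hf
  refine apply_ne_last_of_apply_last_ne hmono fun hlast => ?_
  have h := (hiff (α.symm 0) (Fin.last k)).1 (by simpa [Fin.pos_iff_ne_zero] using hα)
  simp [hlast, phi] at h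

lemma occCount_Phi {α : Equiv.Perm (Fin (k + 1))} (hα : α (Fin.last k) ≠ Fin.last k)
    (π : Equiv.Perm (Fin m)) : occCount α (Phi π) = occCount α π := by
  refine occCount_eq_of_castSucc_lt_iff (by simp [Phi]) fun f hf => ?_
  obtain ⟨hmono, hiff⟩ := mem_occurrences.1 hf
  refine apply_ne_last_of_apply_last_ne hmono fun hlast => ?_
  have h := (hiff (Fin.last k) (α.symm (Fin.last k))).1
    (by simpa [Fin.lt_last_iff_ne_last] using hα)
  rw [hlast] at h
  exact (Fin.le_last _).not_gt (by simpa [Phi] using h)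

end Occurrences

section Append

variable {m : ℕ} {π : Equiv.Perm (Fin (m + 1))}

lemma exists_phi_eq (h : π (Fin.last m) = 0) : ∃ σ, phi σ = π := by
  have hne (j : Fin m) : π j.castSucc ≠ 0 := fun hj =>
    j.castSucc_lt_last.ne (π.injective (hj.trans h.symm))
  have hinj : Function.Injective fun j : Fin m => (π j.castSucc).pred (hne j) := fun i j hij => by
    simpa using hij
  refine ⟨.ofBijective _ (Finite.injective_iff_bijective.1 hinj), Equiv.ext fun i => ?_⟩
  induction i using Fin.lastCases with
  | last => simp [phi, h]
  | cast j => simp [phi]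

lemma exists_Phi_eq (h : π (Fin.last m) = Fin.last m) : ∃ σ, Phi σ = π := by
  have hne (j : Fin m) : π j.castSucc ≠ Fin.last m := fun hj =>
    j.castSucc_lt_last.ne (π.injective (hj.trans h.symm))
  have hinj : Function.Injective fun j : Fin m => (π j.castSucc).castPred (hne j) :=
    fun i j hij => by simpa using hij
  refine ⟨.ofBijective _ (Finite.injective_iff_bijective.1 hinj), Equiv.ext fun i => ?_⟩
  induction i using Fin.lastCases with
  | last => simp [Phi, h]
  | cast j => simp [Phi]

end Append

section SnContainBoth

open Finset

variable {m : ℕ} {α β : Equiv.Perm (Fin 3)} {π : Equiv.Perm (Fin m)}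

lemma phi_mem_SnContainBoth_iff (hα : α 2 ≠ 0) (hβ : β 2 ≠ 0) :
    phi π ∈ SnContainBoth α β (m + 1) ↔ π ∈ SnContainBoth α β m := by
  simp only [SnContainBoth, containsOnce, Set.mem_ofPred_eq, occCount_phi hα, occCount_phi hβ]

lemma Phi_mem_SnContainBoth_iff (hα : α 2 ≠ 2) (hβ : β 2 ≠ 2) :
    Phi π ∈ SnContainBoth α β (m + 1) ↔ π ∈ SnContainBoth α β m := by
  simp only [SnContainBoth, containsOnce, Set.mem_ofPred_eq, occCount_Phi hα, occCount_Phi hβ]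

lemma mem_SnContainBoth_iff_card_occurrences :
    π ∈ SnContainBoth α β m ↔ #(occurrences α π) = 1 ∧ #(occurrences β π) = 1 := by
  simp only [SnContainBoth, containsOnce, Set.mem_ofPred_eq, occCount_eq_card_occurrences]

lemma SnContainBoth_p132_p312_four : SnContainBoth p132 p312 4 = {w2413, w3142} := by
  have enumeration : ∀ π : Equiv.Perm (Fin 4),
      #(occurrences p132 π) = 1 ∧ #(occurrences p312 π) = 1 ↔ π = w2413 ∨ π = w3142 := by
    decide +kernel
  ext π
  exact mem_SnContainBoth_iff_card_occurrences.trans (enumeration π)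

end SnContainBoth

/-- Generating rule for `S_n(∅;{132,312})`, `n = m+1 ≥ 5`:
`S_n(∅;{132,312}) = φ(S_{n−1}(∅;{132,312})) ∪ Φ(S_{n−1}(∅;{132,312}))`;
moreover `S_4(∅;{132,312}) = {2413, 3142}`. -/
theorem generating_rule_both_132_312 :
    (∀ m : ℕ, 5 ≤ m + 1 →
      SnContainBoth p132 p312 (m + 1) =
        phi '' SnContainBoth p132 p312 m ∪ Phi '' SnContainBoth p132 p312 m) ∧
    SnContainBoth p132 p312 4 = {w2413, w3142} := by
  refine ⟨fun m hm => Set.Subset.antisymm (fun π hπ => ?_) ?_, SnContainBoth_p132_p312_four⟩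
  · have hcount : occCount p132 π + occCount p312 π + 1 < m := by
      rw [hπ.1, hπ.2]
      omega
    rcases apply_last_eq_zero_or_last hcount with hzero | hlast
    · obtain ⟨σ, rfl⟩ := exists_phi_eq hzero
      exact Or.inl ⟨σ, (phi_mem_SnContainBoth_iff (by decide) (by decide)).1 hπ, rfl⟩
    · obtain ⟨σ, rfl⟩ := exists_Phi_eq hlast
      exact Or.inr ⟨σ, (Phi_mem_SnContainBoth_iff (by decide) (by decide)).1 hπ, rfl⟩
  · rintro _ (⟨σ, hσ, rfl⟩ | ⟨σ, hσ, rfl⟩)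
    · exact (phi_mem_SnContainBoth_iff (by decide) (by decide)).2 hσ
    · exact (Phi_mem_SnContainBoth_iff (by decide) (by decide)).2 hσ
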